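/- For every integer n ≥ 1, the number of partitions of n in which no even part is repeated equals the number of 4-regular partitions of n (partitions of n in which no part is divisible by 4). -/

import Mathlib

/-- No even part is repeated (all even parts are distinct). -/
def EvenDistinct {n : ℕ} (p : n.Partition) : Prop :=
  ∀ i, Even i → p.parts.count i ≤ 1

/-- No odd part is repeated (all odd parts are distinct). -/
def OddDistinct {n : ℕ} (p : n.Partition) : Prop :=
  ∀ i, Odd i → p.parts.count i ≤ 1

/-- The largest part of a partition (0 for the empty partition of 0). -/
def maxPart {n : ℕ} (p : n.Partition) : ℕ := p.parts.sup

/-!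
Fix a set `S` of part sizes and multiplicity bounds `m i ≥ 1`. Summing geometric series, the
partitions in which every `i ∈ S` occurs fewer than `m i` times have generating function
`∏_{i ∈ S} (1 - X ^ (i * m i)) / ∏_{i ≥ 1} (1 - X ^ i)`. If `i ↦ i * m i` is injective on `S`, the
numerator is `∏_{j ∈ T} (1 - X ^ j)` with `T = {i * m i | i ∈ S}`, and this is again a numerator
of the same kind, for the set `T` and the constant bound `1`: it belongs to the partitions without
parts in `T`. Even numbers with bound `2` give the multiples of `4`.
-/

open PowerSeries Nat.Partition
open scoped PowerSeries.WithPiTopology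

/-- Partitions in which every part `i ∈ S` occurs fewer than `m i` times; parts outside `S` are
unrestricted. -/
def CountBoundedOn (S : Set ℕ) (m : ℕ → ℕ) {n : ℕ} (p : n.Partition) : Prop :=
  ∀ i ∈ S, p.parts.count i < m i

/-- The generating function of the number of partitions of `n` satisfying `CountBoundedOn S m`. -/
noncomputable def countBoundedSeries (R : Type*) [Semiring R] (S : Set ℕ) (m : ℕ → ℕ) : R⟦X⟧ :=
  PowerSeries.mk fun n ↦ (Nat.card {p : n.Partition // CountBoundedOn S m p} : R)

section Counting

variable {S : Set ℕ} {m : ℕ → ℕ} {n : ℕ} {p : n.Partition}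

theorem countBoundedOn_iff_forall_mem_parts (hm : ∀ i ∈ S, 0 < m i) :
    CountBoundedOn S m p ↔ ∀ i ∈ p.parts, i ∈ S → p.parts.count i < m i := by
  refine ⟨fun h i _ hiS ↦ h i hiS, fun h i hiS ↦ ?_⟩
  by_cases hi : i ∈ p.parts
  · exact h i hi hiS
  · simpa only [Multiset.count_eq_zero_of_notMem hi] using hm i hiS

theorem countBoundedOn_one_iff : CountBoundedOn S 1 p ↔ ∀ i ∈ p.parts, i ∉ S := by
  simp only [CountBoundedOn, Pi.one_apply, Nat.lt_one_iff, Multiset.count_eq_zero]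
  exact forall_congr' fun _ ↦ imp_not_comm

theorem coeff_genFun_ite {R : Type*} [CommSemiring R] (P : ℕ → ℕ → Prop)
    [∀ i c, Decidable (P i c)] (n : ℕ) :
    (genFun fun i c ↦ if P i c then (1 : R) else 0).coeff n =
      Nat.card {p : n.Partition // ∀ i ∈ p.parts, P i (p.parts.count i)} := by
  simp only [coeff_genFun, Finsupp.prod, Finset.prod_boole, Finset.sum_boole]
  simp [Fintype.card_subtype]

open Classical in
theorem countBoundedSeries_eq_genFun {R : Type*} [CommSemiring R] (hm : ∀ i ∈ S, 0 < m i) :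
    countBoundedSeries R S m = genFun fun i c ↦ if i ∈ S → c < m i then 1 else 0 := by
  ext n
  simp only [countBoundedSeries, coeff_mk, coeff_genFun_ite,
    countBoundedOn_iff_forall_mem_parts hm]

end Counting

section GeneratingFunction

variable {R : Type*} [CommRing R] [TopologicalSpace R]

theorem one_add_tsum_X_pow_mul_one_sub [T2Space R] [IsTopologicalRing R] {k : ℕ} (hk : k ≠ 0) :
    (1 + ∑' j : ℕ, (X : R⟦X⟧) ^ (k * (j + 1))) * (1 - X ^ k) = 1 := by
  have hX : constantCoeff ((X : R⟦X⟧) ^ k) = 0 := by simp [hk]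
  have hsum := (WithPiTopology.summable_pow_of_constantCoeff_eq_zero hX).tsum_eq_zero_add
  rw [pow_zero] at hsum
  simp only [pow_mul]
  rw [← hsum, WithPiTopology.tsum_pow_mul_one_sub_of_constantCoeff_eq_zero hX]

theorem one_add_tsum_ite_lt_X_pow_mul_one_sub (k : ℕ) {b : ℕ} (hb : 0 < b) :
    (1 + ∑' j : ℕ, (if j + 1 < b then (1 : R) else 0) • (X : R⟦X⟧) ^ (k * (j + 1))) *
      (1 - X ^ k) = 1 - X ^ (k * b) := by
  obtain ⟨b, rfl⟩ := Nat.exists_eq_add_one_of_ne_zero hb.ne'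
  have hfinite : ∑' j : ℕ, (if j + 1 < b + 1 then (1 : R) else 0) • (X : R⟦X⟧) ^ (k * (j + 1)) =
      ∑ j ∈ Finset.range b, ((X : R⟦X⟧) ^ k) ^ (j + 1) := by
    rw [tsum_eq_sum (s := Finset.range b) fun j hj ↦
      smul_eq_zero_of_left (if_neg (by simpa using hj)) _]
    refine Finset.sum_congr rfl fun j hj ↦ ?_
    rw [if_pos (by simpa using hj), one_smul, pow_mul]
  have hgeom := geom_sum_mul_neg ((X : R⟦X⟧) ^ k) (b + 1)
  rwa [Finset.sum_range_succ', pow_zero, add_comm, ← hfinite, ← pow_mul] at hgeom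

theorem tprod_add_one_mulIndicator {α : Type*} [CommMonoid α] [TopologicalSpace α]
    (S : Set ℕ) (f : ℕ → α) :
    ∏' i, S.mulIndicator f (i + 1) = ∏' k : ↥(S \ {0}), f k := by
  have himage : (· + 1) '' {i | i + 1 ∈ S} = S \ {0} := by
    ext k
    cases k <;> simp
  rw [← himage, tprod_image f (add_left_injective 1).injOn,
    tprod_subtype {i | i + 1 ∈ S} fun i ↦ f (i + 1)]
  rfl

theorem countBoundedSeries_mul_tprod_one_sub_X_pow [T2Space R] [IsTopologicalRing R]
    {S : Set ℕ} {m : ℕ → ℕ} (hm : ∀ i ∈ S, 0 < m i) :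
    countBoundedSeries R S m * ∏' i : ℕ, (1 - X ^ (i + 1)) =
      ∏' k : ↥(S \ {0}), (1 - X ^ (k * m k)) := by
  classical
  rw [countBoundedSeries_eq_genFun hm, genFun_eq_tprod,
    ← (multipliable_genFun fun i c ↦ if i ∈ S → c < m i then (1 : R) else 0).tprod_mul
      (WithPiTopology.multipliable_one_sub_X_pow R),
    ← tprod_add_one_mulIndicator S fun k ↦ (1 - X ^ (k * m k) : R⟦X⟧)]
  refine tprod_congr fun i ↦ ?_
  by_cases hi : i + 1 ∈ S
  · simpa only [hi, true_imp_iff, Set.mulIndicator_of_mem] using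
      one_add_tsum_ite_lt_X_pow_mul_one_sub (i + 1) (hm _ hi)
  · simpa only [hi, false_imp_iff, if_true, one_smul, not_false_eq_true,
      Set.mulIndicator_of_notMem] using one_add_tsum_X_pow_mul_one_sub i.succ_ne_zero

end GeneratingFunction

section Equinumerosity

variable {S : Set ℕ} {m : ℕ → ℕ}

theorem image_mul_diff_zero (hm : ∀ i ∈ S, 0 < m i) :
    (fun i ↦ i * m i) '' (S \ {0}) = (fun i ↦ i * m i) '' S \ {0} := by
  ext j
  constructor
  · rintro ⟨i, ⟨hiS, hi⟩, rfl⟩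
    exact ⟨⟨i, hiS, rfl⟩, mul_ne_zero hi (hm i hiS).ne'⟩
  · rintro ⟨⟨i, hiS, rfl⟩, hi⟩
    exact ⟨i, ⟨hiS, left_ne_zero_of_mul hi⟩, rfl⟩

theorem countBoundedSeries_eq_countBoundedSeries_image_one {R : Type*} [CommRing R]
    [NoZeroDivisors R] (hm : ∀ i ∈ S, 0 < m i) (hinj : S.InjOn fun i ↦ i * m i) :
    countBoundedSeries R S m = countBoundedSeries R ((fun i ↦ i * m i) '' S) 1 := by
  nontriviality R
  let _ : TopologicalSpace R := ⊥
  have _ : DiscreteTopology R := ⟨rfl⟩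
  apply mul_right_cancel₀ (WithPiTopology.tprod_one_sub_X_pow_ne_zero R)
  rw [countBoundedSeries_mul_tprod_one_sub_X_pow hm,
    countBoundedSeries_mul_tprod_one_sub_X_pow (m := 1) fun _ _ ↦ one_pos, ← image_mul_diff_zero hm,
    tprod_image (fun j ↦ (1 - X ^ (j * (1 : ℕ → ℕ) j) : R⟦X⟧)) (hinj.mono Set.sdiff_subset)]
  simp only [Pi.one_apply, mul_one]

theorem ped_eq_fourRegular_general (hm : ∀ i ∈ S, 0 < m i) (hinj : S.InjOn fun i ↦ i * m i)
    (n : ℕ) :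
    Nat.card {p : n.Partition // CountBoundedOn S m p} =
      Nat.card {p : n.Partition // ∀ i ∈ p.parts, i ∉ (fun i ↦ i * m i) '' S} := by
  have hcoeff := PowerSeries.ext_iff.mp
    (countBoundedSeries_eq_countBoundedSeries_image_one (R := ℤ) hm hinj) n
  simpa only [countBoundedSeries, coeff_mk, Nat.cast_inj, countBoundedOn_one_iff] using hcoeff

end Equinumerosity

theorem image_mul_two_setOf_even : (fun i : ℕ ↦ i * 2) '' {i | Even i} = {j | 4 ∣ j} := by
  ext j
  simp only [Set.mem_image, Set.mem_ofPred_eq]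
  exact ⟨by grind, fun ⟨k, hk⟩ ↦ ⟨2 * k, even_two_mul k, by lia⟩⟩

theorem ped_eq_fourRegular : ∀ n : ℕ, 1 ≤ n →
    Nat.card {p : n.Partition // EvenDistinct p} =
    Nat.card {p : n.Partition // ∀ i ∈ p.parts, ¬ (4 ∣ i)} := by
  intro n _
  simpa [EvenDistinct, CountBoundedOn, image_mul_two_setOf_even, Nat.lt_succ_iff] using
    ped_eq_fourRegular_general (S := {i | Even i}) (m := fun _ ↦ 2) (fun _ _ ↦ two_pos)
      (mul_left_injective₀ two_ne_zero).injOn n
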